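/- arXiv:1606.03159 — 2 statements merged into one kernel-verified Lean document; each statement's English description precedes it below -/
import Mathlib

section
/- Let p(z) = \sum_{i=0}^n a_i z^i be a polynomial over \mathbb{C} of degree n with a_n \neq 0 and a_0 \neq 0. Then the multiset of complex roots of p (counted with multiplicity) is invariant under the inversion map z \mapsto 1/\overline{z} if and only if there exists w \in \mathbb{C} with |w| = 1 such that p(z) = w \cdot z^n \cdot \bar{p}(1/z) for every z \in \mathbb{C} \setminus \{0\}, where \bar{p}(z) = \sum_{i=0}^n \overline{a_i} z^i is the conjugate polynomial of p. -/
/-!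
Up to a nonzero scalar, `zⁿ p̄(1/z)` is the polynomial whose roots are the inversions of the roots
of `p`. Since a split polynomial is determined up to a scalar by its multiset of roots, invariance
of the roots of `p` means `p(z) = w zⁿ p̄(1/z)` for some `w`; comparing the constant and leading
coefficients, `a₀ = w āₙ` and `aₙ = w ā₀`, gives `w w̄ = 1`.
-/

open Polynomial

section Reverse

theorem reverse_pow {R : Type*} [Semiring R] [NoZeroDivisors R] (p : R[X]) (m : ℕ) :
    (p ^ m).reverse = p.reverse ^ m := by
  induction m with
  | zero => simp only [pow_zero, ← C_1, reverse_C]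
  | succ m ih => rw [pow_succ, reverse_mul_of_domain, ih, pow_succ]

variable {K : Type*} [Field K]

theorem eval_reverse (p : K[X]) {x : K} (hx : x ≠ 0) :
    p.reverse.eval x = x ^ p.natDegree * p.eval x⁻¹ := by
  let _ : Invertible x⁻¹ := invertibleOfNonzero (inv_ne_zero hx)
  have h := eval₂_reverse_mul_pow (RingHom.id K) x⁻¹ p
  rw [invOf_eq_inv, inv_inv] at h
  rw [eval, eval, ← h, inv_pow, mul_comm, mul_assoc, inv_mul_cancel₀ (pow_ne_zero _ hx), mul_one]

theorem reverse_X_sub_C {a : K} (ha : a ≠ 0) :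
    (X - C a).reverse = C (-a) * (X - C a⁻¹) := by
  have reverse_X : (X : K[X]).reverse = 1 := by
    rw [← one_mul X, reverse_mul_X, ← C_1, reverse_C]
  calc (X - C a).reverse = 1 - C a * X := by
        rw [sub_eq_add_neg, ← C_neg, reverse_add_C, reverse_X, natDegree_X, pow_one, C_neg,
          neg_mul, sub_eq_add_neg]
    _ = C (-a) * (X - C a⁻¹) := by
        rw [mul_sub, ← C_mul, neg_mul, mul_inv_cancel₀ ha, C_neg, C_neg, C_1]
        ring

theorem rootMultiplicity_reverse_inv (p : K[X]) {a : K} (ha : a ≠ 0) :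
    p.reverse.rootMultiplicity a⁻¹ = p.rootMultiplicity a := by
  obtain rfl | hp := eq_or_ne p 0
  · simp only [reverse_zero, rootMultiplicity_zero]
  set m := p.rootMultiplicity a
  obtain ⟨q, hpq, hq⟩ := exists_eq_pow_rootMultiplicity_mul_and_not_dvd p hp a
  have hrev : p.reverse = C ((-a) ^ m) * q.reverse * (X - C a⁻¹) ^ m := by
    rw [hpq, reverse_mul_of_domain, reverse_pow, reverse_X_sub_C ha, mul_pow, C_pow]
    ring
  have hroot : ¬ (C ((-a) ^ m) * q.reverse).IsRoot a⁻¹ := by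
    rw [dvd_iff_isRoot, IsRoot] at hq
    simp [eval_reverse q (inv_ne_zero ha), ha, hq]
  rw [hrev, rootMultiplicity_mul_X_sub_C_pow fun h => hroot (by rw [h]; exact eval_zero),
    rootMultiplicity_eq_zero hroot, zero_add]

theorem roots_reverse {p : K[X]} (h0 : p.coeff 0 ≠ 0) :
    p.reverse.roots = p.roots.map (·⁻¹) := by
  classical
  ext b
  obtain ⟨a, rfl⟩ := inv_surjective b
  rw [Multiset.count_map_eq_count' _ _ inv_injective, count_roots, count_roots]
  obtain rfl | ha := eq_or_ne a 0
  · rw [inv_zero, rootMultiplicity_eq_natTrailingDegree', rootMultiplicity_eq_natTrailingDegree',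
      natTrailingDegree_reverse, natTrailingDegree_eq_zero_of_constantCoeff_ne_zero h0]
  · exact rootMultiplicity_reverse_inv p ha

end Reverse

theorem associated_of_roots_eq {K : Type*} [Field K] {p q : K[X]}
    (hp : p.Splits) (hp0 : p ≠ 0) (hq0 : q ≠ 0) (hdeg : q.natDegree ≤ p.natDegree)
    (h : p.roots = q.roots) : Associated p q :=
  associated_of_dvd_of_natDegree_le (hp.dvd_of_roots_le_roots hp0 h.le) hq0 hdeg

theorem eq_of_forall_ne_zero_eval_eq {R : Type*} [CommRing R] [IsDomain R] [Infinite R]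
    {p q : R[X]} (h : ∀ x ≠ 0, p.eval x = q.eval x) : p = q :=
  eq_of_infinite_eval_eq p q ((Set.finite_singleton 0).infinite_compl.mono h)

section ConjReciprocal

/-- The conjugate reciprocal `zⁿ p̄(1/z)` of a polynomial `p` of degree `n`, with respect to an
arbitrary star operation on the coefficients. -/
noncomputable def conjReciprocal {R : Type*} [CommSemiring R] [StarRing R] (p : R[X]) : R[X] :=
  (p.map (starRingEnd R)).reverse

section CommSemiring

variable {R : Type*} [CommSemiring R] [StarRing R]

theorem natDegree_map_starRingEnd (p : R[X]) :
    (p.map (starRingEnd R)).natDegree = p.natDegree :=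
  natDegree_map_eq_of_injective star_injective p

theorem natDegree_conjReciprocal_le (p : R[X]) :
    (conjReciprocal p).natDegree ≤ p.natDegree :=
  (reverse_natDegree_le _).trans_eq (natDegree_map_starRingEnd p)

theorem coeff_zero_conjReciprocal (p : R[X]) :
    (conjReciprocal p).coeff 0 = starRingEnd R p.leadingCoeff := by
  rw [conjReciprocal, coeff_zero_reverse, leadingCoeff, natDegree_map_starRingEnd, coeff_map,
    leadingCoeff]

theorem coeff_natDegree_conjReciprocal (p : R[X]) :
    (conjReciprocal p).coeff p.natDegree = starRingEnd R (p.coeff 0) := by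
  rw [conjReciprocal, coeff_reverse, natDegree_map_starRingEnd, revAt_le le_rfl, Nat.sub_self,
    coeff_map]

end CommSemiring

theorem mem_unitary_of_eq_C_mul_conjReciprocal {R : Type*} [CommRing R] [IsDomain R] [StarRing R]
    {p : R[X]} (hp : p ≠ 0) {w : R} (h : p = C w * conjReciprocal p) : w ∈ unitary R := by
  have hconst : p.coeff 0 = w * starRingEnd R p.leadingCoeff := by
    rw [← coeff_zero_conjReciprocal, ← coeff_C_mul, ← h]
  have hlead : p.leadingCoeff = w * starRingEnd R (p.coeff 0) := by
    rw [← coeff_natDegree_conjReciprocal, ← coeff_C_mul, ← h, leadingCoeff]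
  rw [Unitary.mem_iff_self_mul_star]
  refine mul_right_cancel₀ (leadingCoeff_ne_zero.mpr hp) ?_
  calc w * star w * p.leadingCoeff
      = w * starRingEnd R (w * starRingEnd R p.leadingCoeff) := by
        rw [map_mul, starRingEnd_self_apply, starRingEnd_apply, mul_assoc]
    _ = 1 * p.leadingCoeff := by rw [← hconst, ← hlead, one_mul]

variable {K : Type*} [Field K] [StarRing K]

theorem eval_conjReciprocal (p : K[X]) {z : K} (hz : z ≠ 0) :
    (conjReciprocal p).eval z = z ^ p.natDegree * (p.map (starRingEnd K)).eval z⁻¹ := by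
  rw [conjReciprocal, eval_reverse _ hz, natDegree_map_starRingEnd]

theorem roots_conjReciprocal {p : K[X]} (hp : p.Splits) (h0 : p.coeff 0 ≠ 0) :
    (conjReciprocal p).roots = p.roots.map (fun z => (starRingEnd K z)⁻¹) := by
  have h0' : (p.map (starRingEnd K)).coeff 0 ≠ 0 := by
    rwa [coeff_map, _root_.map_ne_zero]
  rw [conjReciprocal, roots_reverse h0', hp.roots_map, Multiset.map_map, Function.comp_def]

theorem roots_conjReciprocal_eq_roots_iff {p : K[X]} (hp : p.Splits) (hp0 : p ≠ 0) :
    (conjReciprocal p).roots = p.roots ↔ ∃ w ∈ unitary K, p = C w * conjReciprocal p := by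
  constructor
  · intro h
    have hrec : conjReciprocal p ≠ 0 := by
      simpa [conjReciprocal] using hp0
    obtain ⟨u, hu⟩ : Associated (conjReciprocal p) p :=
      (associated_of_roots_eq hp hp0 hrec (natDegree_conjReciprocal_le p) h.symm).symm
    obtain ⟨w, -, hw⟩ := Polynomial.isUnit_iff.mp u.isUnit
    have hself : p = C w * conjReciprocal p := by rw [hw, mul_comm, hu]
    exact ⟨w, mem_unitary_of_eq_C_mul_conjReciprocal hp0 hself, hself⟩
  · rintro ⟨w, -, h⟩
    have hw : w ≠ 0 := by
      rintro rfl
      exact hp0 (by simpa using h)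
    rw [← roots_C_mul (conjReciprocal p) hw, ← h]

end ConjReciprocal

theorem mem_unitary_iff_norm_eq_one {𝕜 : Type*} [RCLike 𝕜] {w : 𝕜} :
    w ∈ unitary 𝕜 ↔ ‖w‖ = 1 := by
  rw [Unitary.mem_iff_self_mul_star, ← starRingEnd_apply, RCLike.mul_conj]
  norm_cast
  exact pow_eq_one_iff_of_nonneg (norm_nonneg w) two_ne_zero

theorem stmt_1_general {K : Type*} [Field K] [StarRing K] [Infinite K] {p : K[X]}
    (hp : p.Splits) (h0 : p.coeff 0 ≠ 0) :
    p.roots.map (fun z => (starRingEnd K z)⁻¹) = p.roots ↔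
      ∃ w ∈ unitary K, ∀ z : K, z ≠ 0 →
        p.eval z = w * z ^ p.natDegree * (p.map (starRingEnd K)).eval z⁻¹ := by
  have hp0 : p ≠ 0 := fun h => h0 (by rw [h, coeff_zero])
  rw [← roots_conjReciprocal hp h0, roots_conjReciprocal_eq_roots_iff hp hp0]
  refine exists_congr fun w => and_congr_right fun _ => ?_
  have heval (z : K) (hz : z ≠ 0) : (C w * conjReciprocal p).eval z =
      w * z ^ p.natDegree * (p.map (starRingEnd K)).eval z⁻¹ := by
    rw [eval_C_mul, eval_conjReciprocal p hz, mul_assoc]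
  exact ⟨fun h z hz => (congrArg (eval z) h).trans (heval z hz),
    fun h => eq_of_forall_ne_zero_eval_eq fun z hz => (h z hz).trans (heval z hz).symm⟩

/-- A degree-`n` polynomial over `ℂ` with nonzero constant and leading coefficients has its
multiset of roots invariant under the inversion `z ↦ 1/conj z` iff there is a unimodular `w`
with `p(z) = w * zⁿ * conj_p(1/z)` for all `z ≠ 0`, where `conj_p` is the conjugate polynomial. -/
theorem stmt_1 (n : ℕ) (p : Polynomial ℂ) (hdeg : p.natDegree = n)
    (han : p.coeff n ≠ 0) (ha0 : p.coeff 0 ≠ 0) :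
    p.roots.map (fun z => ((starRingEnd ℂ) z)⁻¹) = p.roots ↔
      ∃ w : ℂ, ‖w‖ = 1 ∧ ∀ z : ℂ, z ≠ 0 →
        p.eval z = w * z ^ n * (p.map (starRingEnd ℂ)).eval z⁻¹ := by
  simp only [← hdeg, ← mem_unitary_iff_norm_eq_one]
  exact stmt_1_general (IsAlgClosed.splits p) ha0
end

section
/- Let p be a self-inversive polynomial over \mathbb{C} of degree n \ge 1. Then all roots of p lie on the unit circle |z| = 1 if and only if all roots of its derivative p' lie in the closed unit disk |z| \le 1. (Cohn's theorem.) -/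
open Polynomial

/-! With respect to the degree `n`, write `p*(z) = zⁿ conj (p (1 / conj z))`. Self-inversiveness
reads `p = w p*`, so the roots of `p` are symmetric under `z ↦ 1 / conj z`, and it suffices to
exclude roots outside the closed unit disk. Differentiating the relation gives
`n p - z p' = w (p')*`, so `|z| |p'(z)| = |(p')*(z)|` at a root `z` of `p`. If all roots `a` of `p'`
lie in the closed disk and `|z| ≥ 1`, then `|(p')*(z)| ≤ |p'(z)|`, as `|1 - conj a z| ≤ |z - a|`
factor by factor. Hence `|z| > 1` would force `p'(z) = 0`, which is absurd. The converse is the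
Gauss–Lucas theorem. -/

section ConjReflect

variable {R : Type*} [CommRing R] [StarRing R]

/-- The conjugate reciprocal `p*` of a polynomial `p` with respect to the formal degree `n`, with
coefficients `conj (p.coeff (n - j))` for `j ≤ n`. As for `Polynomial.reflect`, the coefficients
beyond `n` stay in place, so it is meaningful for `p.natDegree ≤ n`. -/
noncomputable def conjReflect (n : ℕ) (p : R[X]) : R[X] :=
  (p.reflect n).map (starRingEnd R)

lemma coeff_conjReflect (n : ℕ) (p : R[X]) (j : ℕ) :
    (conjReflect n p).coeff j = starRingEnd R (p.coeff (revAt n j)) := by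
  rw [conjReflect, coeff_map, coeff_reflect]

lemma conjReflect_derivative {n : ℕ} {p : R[X]} (hp : p.natDegree ≤ n) :
    conjReflect (n - 1) (derivative p) =
      C (n : R) * conjReflect n p - X * derivative (conjReflect n p) := by
  ext j
  have coeff_X_mul_derivative :
      (X * derivative (conjReflect n p)).coeff j = j * (conjReflect n p).coeff j := by
    cases j with
    | zero => simp
    | succ j => rw [coeff_X_mul, coeff_derivative]; push_cast; ring
  rw [coeff_sub, coeff_C_mul, coeff_X_mul_derivative, ← sub_mul]
  simp only [coeff_conjReflect, coeff_derivative, map_mul, map_add, map_natCast, map_one]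
  rcases lt_or_ge j n with hj | hj
  · obtain ⟨k, rfl⟩ := Nat.exists_eq_add_of_lt hj
    rw [Nat.add_sub_cancel, revAt_le (Nat.le_add_right j k), revAt_le hj.le,
      Nat.add_sub_cancel_left, Nat.add_assoc, Nat.add_sub_cancel_left]
    push_cast
    ring
  · have n_lt_index : n < revAt (n - 1) j + 1 := by
      rcases le_or_gt j (n - 1) with hj' | hj'
      · omega
      · rw [revAt_eq_self_of_lt hj']; omega
    rw [coeff_eq_zero_of_natDegree_lt (hp.trans_lt n_lt_index), map_zero, zero_mul]
    rcases hj.eq_or_lt with rfl | hj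
    · rw [sub_self, zero_mul]
    · rw [revAt_eq_self_of_lt hj, coeff_eq_zero_of_natDegree_lt (hp.trans_lt hj), map_zero,
        mul_zero]

end ConjReflect

section EvalConjReflect

variable {K : Type*} [Field K] [StarRing K]

lemma eval_conjReflect {n : ℕ} {p : K[X]} (hp : p.natDegree ≤ n) {z : K} (hz : z ≠ 0) :
    (conjReflect n p).eval z = z ^ n * starRingEnd K (p.eval (starRingEnd K z)⁻¹) := by
  let : Invertible z⁻¹ := invertibleOfNonzero (inv_ne_zero hz)
  have h := eval₂_reflect_mul_pow (starRingEnd K) z⁻¹ n p hp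
  rw [invOf_eq_inv, inv_inv] at h
  rw [conjReflect, eval_map, ← eval₂_hom, map_inv₀, starRingEnd_self_apply, ← h, inv_pow]
  field_simp

lemma eval_conjReflect_of_splits {p : K[X]} (hp : p.Splits) (z : K) :
    (conjReflect p.natDegree p).eval z = starRingEnd K p.leadingCoeff *
      (p.roots.map fun a => 1 - starRingEnd K a * z).prod := by
  rcases eq_or_ne z 0 with rfl | hz
  · simp [← coeff_zero_eq_eval_zero, coeff_conjReflect]
  have factor (a : K) : z * starRingEnd K ((starRingEnd K z)⁻¹ - a) = 1 - starRingEnd K a * z := by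
    rw [map_sub, map_inv₀, starRingEnd_self_apply]
    field_simp
  rw [eval_conjReflect le_rfl hz, hp.eval_eq_prod_roots, hp.natDegree_eq_card_roots, map_mul,
    map_multiset_prod, Multiset.map_map, mul_left_comm]
  simp only [← factor, Multiset.prod_map_mul, Multiset.map_const', Multiset.prod_replicate,
    Function.comp_apply]

end EvalConjReflect

section RCLike

variable {𝕜 : Type*} [RCLike 𝕜]

lemma norm_one_sub_conj_mul_le_norm_sub {a z : 𝕜} (ha : ‖a‖ ≤ 1) (hz : 1 ≤ ‖z‖) :
    ‖1 - starRingEnd 𝕜 a * z‖ ≤ ‖z - a‖ := by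
  have sq_sub_sq : ‖z - a‖ ^ 2 - ‖1 - starRingEnd 𝕜 a * z‖ ^ 2 =
      (‖z‖ ^ 2 - 1) * (1 - ‖a‖ ^ 2) := by
    rw [← RCLike.normSq_eq_def', ← RCLike.normSq_eq_def', RCLike.normSq_sub, RCLike.normSq_sub]
    simp only [map_mul, map_one, one_mul, RCLike.conj_conj, RCLike.normSq_eq_def',
      RCLike.norm_conj, RCLike.mul_re, RCLike.conj_re, RCLike.conj_im]
    ring
  have : 0 ≤ (‖z‖ ^ 2 - 1) * (1 - ‖a‖ ^ 2) :=
    mul_nonneg (sub_nonneg.2 (one_le_pow₀ hz)) (sub_nonneg.2 (pow_le_one₀ (norm_nonneg a) ha))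
  exact le_of_sq_le_sq (by linarith) (norm_nonneg _)

lemma norm_eval_conjReflect_le {p : 𝕜[X]} (hp : p.Splits) (hroots : ∀ a ∈ p.roots, ‖a‖ ≤ 1)
    {z : 𝕜} (hz : 1 ≤ ‖z‖) : ‖(conjReflect p.natDegree p).eval z‖ ≤ ‖p.eval z‖ := by
  rw [eval_conjReflect_of_splits hp, hp.eval_eq_prod_roots, norm_mul, norm_mul, RCLike.norm_conj]
  gcongr
  rw [← normHom_apply, ← normHom_apply, map_multiset_prod, map_multiset_prod, Multiset.map_map,
    Multiset.map_map]
  exact Multiset.prod_map_le_prod_map₀ _ _ (fun a _ => norm_nonneg (1 - starRingEnd 𝕜 a * z))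
    fun a ha => norm_one_sub_conj_mul_le_norm_sub (hroots a ha) hz

/-- Self-inversive polynomials: the coefficient sequence, reversed and conjugated, is a unimodular
multiple of itself. -/
def IsSelfInversive (p : 𝕜[X]) : Prop :=
  ∃ w : 𝕜, ‖w‖ = 1 ∧
    ∀ j ≤ p.natDegree, p.coeff j = w * starRingEnd 𝕜 (p.coeff (p.natDegree - j))

namespace IsSelfInversive

variable {p : 𝕜[X]}

lemma exists_eq_C_mul_conjReflect (hp : IsSelfInversive p) :
    ∃ w : 𝕜, ‖w‖ = 1 ∧ p = C w * conjReflect p.natDegree p := by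
  obtain ⟨w, hw, hcoeff⟩ := hp
  refine ⟨w, hw, ext fun j => ?_⟩
  rw [coeff_C_mul, coeff_conjReflect]
  rcases le_or_gt j p.natDegree with hj | hj
  · rw [revAt_le hj, ← hcoeff j hj]
  · rw [revAt_eq_self_of_lt hj, coeff_eq_zero_of_natDegree_lt hj, map_zero, mul_zero]

lemma norm_eval_conjReflect (hp : IsSelfInversive p) (z : 𝕜) :
    ‖(conjReflect p.natDegree p).eval z‖ = ‖p.eval z‖ := by
  obtain ⟨w, hw, h⟩ := hp.exists_eq_C_mul_conjReflect
  nth_rw 3 [h]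
  rw [eval_C_mul, norm_mul, hw, one_mul]

lemma norm_eval_conjReflect_derivative (hp : IsSelfInversive p) {z : 𝕜} (hz : p.IsRoot z) :
    ‖(conjReflect (derivative p).natDegree (derivative p)).eval z‖ =
      ‖z‖ * ‖(derivative p).eval z‖ := by
  obtain ⟨w, hw, h⟩ := hp.exists_eq_C_mul_conjReflect
  have derivative_identity : C (p.natDegree : 𝕜) * p - X * derivative p =
      C w * conjReflect (derivative p).natDegree (derivative p) := by
    rw [natDegree_derivative, conjReflect_derivative le_rfl]
    calc
      _ = C (p.natDegree : 𝕜) * (C w * conjReflect p.natDegree p) -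
          X * derivative (C w * conjReflect p.natDegree p) := by rw [← h]
      _ = _ := by rw [derivative_C_mul]; ring
  simpa [hz.eq_zero, hw] using (congrArg (fun q => ‖q.eval z‖) derivative_identity).symm

lemma ne_zero_of_isRoot (hp : IsSelfInversive p) (hp0 : p ≠ 0) {z : 𝕜} (hz : p.IsRoot z) :
    z ≠ 0 := by
  rintro rfl
  have h := hp.norm_eval_conjReflect 0
  rw [hz.eq_zero, norm_zero, ← coeff_zero_eq_eval_zero, coeff_conjReflect, revAt_zero,
    RCLike.norm_conj] at h
  exact hp0 (leadingCoeff_eq_zero.1 (norm_eq_zero.1 h))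

lemma isRoot_inv_conj (hp : IsSelfInversive p) (hp0 : p ≠ 0) {z : 𝕜} (hz : p.IsRoot z) :
    p.IsRoot (starRingEnd 𝕜 z)⁻¹ := by
  have hz0 := hp.ne_zero_of_isRoot hp0 hz
  have h := hp.norm_eval_conjReflect z
  rw [hz.eq_zero, norm_zero, eval_conjReflect le_rfl hz0, norm_mul, RCLike.norm_conj] at h
  simpa [hz0] using h

lemma norm_eq_one_of_isRoot (hp : IsSelfInversive p) (hp0 : p ≠ 0)
    (hle : ∀ z, p.IsRoot z → ‖z‖ ≤ 1) {z : 𝕜} (hz : p.IsRoot z) : ‖z‖ = 1 := by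
  have norm_inv_le_one := hle _ (hp.isRoot_inv_conj hp0 hz)
  rw [norm_inv, RCLike.norm_conj,
    inv_le_one₀ (norm_pos_iff.2 (hp.ne_zero_of_isRoot hp0 hz))] at norm_inv_le_one
  exact le_antisymm (hle z hz) norm_inv_le_one

lemma norm_le_one_of_isRoot (hp : IsSelfInversive p) (hsplits : (derivative p).Splits)
    (hcrit : ∀ z, (derivative p).IsRoot z → ‖z‖ ≤ 1) {z : 𝕜} (hz : p.IsRoot z) : ‖z‖ ≤ 1 := by
  by_contra! hlt
  have not_critical : 0 < ‖(derivative p).eval z‖ :=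
    norm_pos_iff.2 fun h => (hcrit z h).not_gt hlt
  have : ‖z‖ * ‖(derivative p).eval z‖ ≤ ‖(derivative p).eval z‖ :=
    hp.norm_eval_conjReflect_derivative hz ▸
      norm_eval_conjReflect_le hsplits (fun a ha => hcrit a (isRoot_of_mem_roots ha)) hlt.le
  exact this.not_gt (lt_mul_of_one_lt_left not_critical hlt)

end IsSelfInversive

end RCLike

lemma mem_of_isRoot_derivative_of_convex {p : ℂ[X]} (hp : 0 < p.natDegree) {s : Set ℂ}
    (hs : Convex ℝ s) (hroots : ∀ z, p.IsRoot z → z ∈ s) {z : ℂ}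
    (hz : (derivative p).IsRoot z) : z ∈ s := by
  have derivative_ne_zero : derivative p ≠ 0 := fun h => hp.ne' (derivative_eq_zero.1 h)
  have mem_hull := rootSet_derivative_subset_convexHull_rootSet
    (natDegree_pos_iff_degree_pos.1 hp)
    ((mem_rootSet_of_ne derivative_ne_zero).2 (by simpa using hz))
  exact convexHull_min (fun a ha => hroots a (by simpa using (mem_rootSet.1 ha).2)) hs mem_hull

/-- Cohn's theorem: a self-inversive polynomial of degree `n ≥ 1` has all its roots on the
unit circle iff all the roots of its derivative lie in the closed unit disk. -/
theorem stmt_13 (n : ℕ) (hn : 1 ≤ n) (p : Polynomial ℂ) (hdeg : p.natDegree = n)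
    (han : p.coeff n ≠ 0)
    (hsi : ∃ w : ℂ, ‖w‖ = 1 ∧
      ∀ j ≤ n, p.coeff j = w * (starRingEnd ℂ) (p.coeff (n - j))) :
    (∀ z : ℂ, p.eval z = 0 → ‖z‖ = 1) ↔
      (∀ z : ℂ, (derivative p).eval z = 0 → ‖z‖ ≤ 1) := by
  subst hdeg
  have hself : IsSelfInversive p := hsi
  have hp0 : p ≠ 0 := ne_zero_of_natDegree_gt hn
  constructor
  · intro hroots z hz
    exact mem_closedBall_zero_iff.1 <| mem_of_isRoot_derivative_of_convex hn
      (convex_closedBall 0 1) (fun a ha => mem_closedBall_zero_iff.2 (hroots a ha).le) hz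
  · intro hcrit z hz
    exact hself.norm_eq_one_of_isRoot hp0
      (fun a ha => hself.norm_le_one_of_isRoot (IsAlgClosed.splits _) hcrit ha) hz
end
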